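/- Let N, M, d, G be positive integers, H an N×M complex matrix, σ > 0, and g₀ ∈ {1,…,G}. For a family V = (V_1,…,V_G) of M×d complex matrices define X(V) = Σ_{g=1}^G H V_g V_gᴴ Hᴴ + σ² I_N and J(V) = (X(V) − H V_{g₀} V_{g₀}ᴴ Hᴴ)⁻¹. Fix an expansion family V⁰ = (V⁰_1,…,V⁰_G) and set U⁰ = X(V⁰)⁻¹ H V⁰_{g₀}, Q⁰ = I_d − (U⁰)ᴴ H V⁰_{g₀}. Fix reals F, C⁰, η⁰ and define A = Hᴴ U⁰ (Q⁰)⁻¹ (U⁰)ᴴ H, B = −(Q⁰)⁻¹ (U⁰)ᴴ H, b = Re Tr((Q⁰)⁻¹ (I_d + σ² (U⁰)ᴴ U⁰)) + log((det Q⁰).re) + (η⁰ + C⁰)²/2 − d, and the surrogate f(C, η, V) = Σ_{g=1}^G Re Tr(V_gᴴ A V_g) + 2 Re Tr(B V_{g₀}) + (η² + C²)/2 + F η − (η⁰ + C⁰)(η + C) + b. Then equality holds at the expansion point: f(C⁰, η⁰, V⁰) = (F − C⁰) η⁰ − log((det(I_N + H V⁰_{g₀} (V⁰_{g₀})ᴴ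 Hᴴ J(V⁰))).re). -/

import Mathlib

open Matrix BigOperators

/-- The interference-plus-signal covariance `X(V) = ∑ g, H V_g V_gᴴ Hᴴ + σ² I_N`. -/
noncomputable def Xmat {N M d G : ℕ} (H : Matrix (Fin N) (Fin M) ℂ) (σ : ℝ)
    (V : Fin G → Matrix (Fin M) (Fin d) ℂ) : Matrix (Fin N) (Fin N) ℂ :=
  (∑ g, H * V g * (V g)ᴴ * Hᴴ) + ((σ : ℂ) ^ 2) • (1 : Matrix (Fin N) (Fin N) ℂ)

/-- `J(V) = (X(V) − H V_{g₀} V_{g₀}ᴴ Hᴴ)⁻¹`, the inverse interference-plus-noise covariance. -/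
noncomputable def Jmat {N M d G : ℕ} (H : Matrix (Fin N) (Fin M) ℂ) (σ : ℝ) (g₀ : Fin G)
    (V : Fin G → Matrix (Fin M) (Fin d) ℂ) : Matrix (Fin N) (Fin N) ℂ :=
  (Xmat H σ V - H * V g₀ * (V g₀)ᴴ * Hᴴ)⁻¹

/-
With `W = H V⁰_{g₀}` and `X = X(V⁰)`, the part of the surrogate that depends on the matrices is the
weighted mean square error `Re Tr((Q⁰)⁻¹ E(U⁰))` of the linear receiver `U⁰`. At the MMSE receiver
`U⁰ = X⁻¹ W` the error matrix `E(U⁰)` is `Q⁰` itself, so this part equals `Tr(I_d) = d` and cancels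
the `- d` in `b`. The Weinstein–Aronszajn identity gives `det Q⁰ = det(I + W Wᴴ J)⁻¹`, which turns
`log det Q⁰` into minus the achievable rate.
-/

open scoped ComplexOrder

section MeanSquareError

variable {n m k ι α : Type*} [Fintype n] [CommRing α] [StarRing α]

/-- The error matrix `𝔼[(Uᴴ y - s)(Uᴴ y - s)ᴴ]` of the linear receiver `U`, for a received signal
`y` with covariance `X` and transmitted symbols `s` with covariance `1` and cross-covariance
`𝔼[y sᴴ] = W`. -/
def mseMatrix [DecidableEq k] (X : Matrix n n α) (W U : Matrix n k α) : Matrix k k α :=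
  1 - Uᴴ * W - Wᴴ * U + Uᴴ * X * U

lemma mseMatrix_inv_mul [DecidableEq n] [DecidableEq k] {X : Matrix n n α} (hX : X.IsHermitian)
    (hXu : IsUnit X) (W : Matrix n k α) :
    mseMatrix X W (X⁻¹ * W) = 1 - Wᴴ * X⁻¹ * W := by
  have hXX : X * (X⁻¹ * W) = W :=
    mul_nonsing_inv_cancel_left X W ((isUnit_iff_isUnit_det X).mp hXu)
  simp only [mseMatrix, conjTranspose_mul, hX.inv.eq, Matrix.mul_assoc, hXX]
  abel

lemma sum_trace_add_trace_noise [Fintype m] [Fintype k] [Fintype ι] (H : Matrix n m α)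
    (V : ι → Matrix m k α) (R : Matrix n n α) (U : Matrix n k α) (P : Matrix k k α) :
    ∑ g, ((V g)ᴴ * (Hᴴ * U * P * Uᴴ * H) * V g).trace + (P * (Uᴴ * R * U)).trace
      = (P * (Uᴴ * (∑ g, H * V g * (V g)ᴴ * Hᴴ + R) * U)).trace := by
  have hcycle (g : ι) : ((V g)ᴴ * (Hᴴ * U * P * Uᴴ * H) * V g).trace
      = (P * (Uᴴ * (H * V g * (V g)ᴴ * Hᴴ) * U)).trace := by
    simpa only [Matrix.mul_assoc] using
      trace_mul_comm ((V g)ᴴ * Hᴴ * U) (P * Uᴴ * H * V g)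
  simp only [hcycle, Matrix.mul_add, Matrix.add_mul, trace_add, Matrix.mul_sum, Matrix.sum_mul,
    trace_sum]

end MeanSquareError

section Surrogate

variable {n m k ι 𝕜 : Type*} [Fintype n] [Fintype m] [Fintype k] [Fintype ι]
  [DecidableEq k] [RCLike 𝕜]

lemma re_trace_mul_mseMatrix {P : Matrix k k 𝕜} (hP : P.IsHermitian) (X : Matrix n n 𝕜)
    (W U : Matrix n k 𝕜) :
    RCLike.re (P * mseMatrix X W U).trace
      = RCLike.re (P * (Uᴴ * X * U)).trace - 2 * RCLike.re (P * Uᴴ * W).trace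
        + RCLike.re P.trace := by
  have hconj : RCLike.re (P * (Wᴴ * U)).trace = RCLike.re (P * (Uᴴ * W)).trace := by
    have hstar : (P * (Wᴴ * U)).trace = star (P * (Uᴴ * W)).trace := by
      rw [← trace_conjTranspose, trace_mul_comm]
      simp only [conjTranspose_mul, conjTranspose_conjTranspose, hP.eq, Matrix.mul_assoc]
    rw [hstar, ← starRingEnd_apply, RCLike.conj_re]
  simp only [mseMatrix, Matrix.mul_add, Matrix.mul_sub, Matrix.mul_one, trace_add, trace_sub,
    map_add, map_sub, hconj, Matrix.mul_assoc P Uᴴ W]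
  ring

lemma re_trace_surrogate_eq_re_trace_mul_mseMatrix (H : Matrix n m 𝕜) (V : ι → Matrix m k 𝕜)
    (g₀ : ι) (R : Matrix n n 𝕜) (U : Matrix n k 𝕜) {P : Matrix k k 𝕜} (hP : P.IsHermitian) :
    ∑ g, RCLike.re ((V g)ᴴ * (Hᴴ * U * P * Uᴴ * H) * V g).trace
        + 2 * RCLike.re (-(P * Uᴴ * H) * V g₀).trace + RCLike.re (P * (1 + Uᴴ * R * U)).trace
      = RCLike.re (P * mseMatrix (∑ g, H * V g * (V g)ᴴ * Hᴴ + R) (H * V g₀) U).trace := by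
  rw [re_trace_mul_mseMatrix hP, ← sum_trace_add_trace_noise]
  simp only [Matrix.mul_add, Matrix.mul_one, Matrix.neg_mul, trace_add, trace_neg, map_add, map_neg,
    map_sum, Matrix.mul_assoc]
  ring

end Surrogate

section Determinant

variable {n k : Type*} [Fintype n] [Fintype k] [DecidableEq n] [DecidableEq k]

lemma det_one_add_mul_inv_sub_mul_det_one_sub {α : Type*} [CommRing α] {X : Matrix n n α}
    (A : Matrix n k α) (B : Matrix k n α) (hX : IsUnit X) (hY : IsUnit (X - A * B)) :
    (1 + A * B * (X - A * B)⁻¹).det * (1 - B * X⁻¹ * A).det = 1 := by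
  rw [isUnit_iff_isUnit_det] at hX hY
  have hadd : 1 + A * B * (X - A * B)⁻¹ = X * (X - A * B)⁻¹ := by
    rw [← mul_nonsing_inv _ hY, ← Matrix.add_mul, sub_add_cancel]
  have hsub : 1 - A * (B * X⁻¹) = (X - A * B) * X⁻¹ := by
    rw [Matrix.sub_mul, mul_nonsing_inv _ hX, Matrix.mul_assoc]
  rw [← det_one_sub_mul_comm, hadd, hsub, ← det_mul, Matrix.mul_assoc,
    nonsing_inv_mul_cancel_left _ _ hY, mul_nonsing_inv _ hX, det_one]

variable {𝕜 : Type*} [RCLike 𝕜]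

lemma ofReal_re_det_of_isHermitian {A : Matrix n n 𝕜} (hA : A.IsHermitian) :
    (RCLike.re A.det : 𝕜) = A.det := by
  rw [← RCLike.conj_eq_iff_re, starRingEnd_apply, ← det_conjTranspose, hA.eq]

lemma log_re_det_one_sub_eq_neg_log_re_det_one_add {X : Matrix n n 𝕜} (W : Matrix n k 𝕜)
    (hXh : X.IsHermitian) (hX : IsUnit X) (hY : IsUnit (X - W * Wᴴ)) :
    Real.log (RCLike.re (1 - Wᴴ * X⁻¹ * W).det)
      = -Real.log (RCLike.re (1 + W * Wᴴ * (X - W * Wᴴ)⁻¹).det) := by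
  have hQ : (1 - Wᴴ * X⁻¹ * W).IsHermitian :=
    isHermitian_one.sub (isHermitian_conjTranspose_mul_mul W hXh.inv)
  rw [eq_inv_of_mul_eq_one_left (det_one_add_mul_inv_sub_mul_det_one_sub W Wᴴ hX hY),
    ← ofReal_re_det_of_isHermitian hQ, ← RCLike.ofReal_inv, RCLike.ofReal_re, RCLike.ofReal_re,
    Real.log_inv, neg_neg]

end Determinant

lemma posDef_Xmat_sub {N M d G : ℕ} (H : Matrix (Fin N) (Fin M) ℂ) {σ : ℝ} (hσ : σ ≠ 0)
    (g₀ : Fin G) (V : Fin G → Matrix (Fin M) (Fin d) ℂ) :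
    (Xmat H σ V - H * V g₀ * (V g₀)ᴴ * Hᴴ).PosDef := by
  have hsplit : Xmat H σ V - H * V g₀ * (V g₀)ᴴ * Hᴴ
      = ∑ g ∈ Finset.univ.erase g₀, H * V g * (V g)ᴴ * Hᴴ + ((σ : ℂ) ^ 2) • 1 := by
    rw [Xmat, ← Finset.add_sum_erase _ _ (Finset.mem_univ g₀)]
    abel
  have hnoise : (((σ : ℂ) ^ 2) • (1 : Matrix (Fin N) (Fin N) ℂ)).PosDef :=
    PosDef.one.smul (mod_cast sq_pos_of_ne_zero hσ)
  rw [hsplit]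
  refine PosDef.posSemidef_add (posSemidef_sum _ fun g _ => ?_) hnoise
  simpa only [conjTranspose_mul, Matrix.mul_assoc] using
    posSemidef_self_mul_conjTranspose (H * V g)

/-- `R` is the covariance of a possibly coloured noise, in place of `σ² I`. -/
theorem stmt1_general {n m k ι 𝕜 : Type*} [Fintype n] [DecidableEq n] [Fintype m] [Fintype k]
    [DecidableEq k] [Fintype ι] [RCLike 𝕜] (H : Matrix n m 𝕜) (R : Matrix n n 𝕜) (g₀ : ι)
    (V0 : ι → Matrix m k 𝕜) (F C0 η0 : ℝ)
    (X : Matrix n n 𝕜) (hX : X = ∑ g, H * V0 g * (V0 g)ᴴ * Hᴴ + R)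
    (hJ : (X - H * V0 g₀ * (V0 g₀)ᴴ * Hᴴ).PosDef)
    (U0 : Matrix n k 𝕜) (hU0 : U0 = X⁻¹ * (H * V0 g₀))
    (Q0 : Matrix k k 𝕜) (hQ0 : Q0 = 1 - U0ᴴ * (H * V0 g₀))
    (A : Matrix m m 𝕜) (hA : A = Hᴴ * U0 * Q0⁻¹ * U0ᴴ * H)
    (B : Matrix k m 𝕜) (hB : B = -(Q0⁻¹ * U0ᴴ * H))
    (b : ℝ)
    (hb : b = RCLike.re (Q0⁻¹ * (1 + U0ᴴ * R * U0)).trace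
      + Real.log (RCLike.re Q0.det) + (η0 + C0) ^ 2 / 2 - Fintype.card k)
    (f : ℝ → ℝ → (ι → Matrix m k 𝕜) → ℝ)
    (hf : ∀ C η V, f C η V = (∑ g, RCLike.re ((V g)ᴴ * A * V g).trace)
      + 2 * RCLike.re (B * V g₀).trace + (η ^ 2 + C ^ 2) / 2 + F * η
      - (η0 + C0) * (η + C) + b) :
    f C0 η0 V0 = (F - C0) * η0
      - Real.log (RCLike.re
          (1 + H * V0 g₀ * (V0 g₀)ᴴ * Hᴴ * (X - H * V0 g₀ * (V0 g₀)ᴴ * Hᴴ)⁻¹).det) := by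
  set W := H * V0 g₀ with hW
  have hWW : W * (V0 g₀)ᴴ * Hᴴ = W * Wᴴ := by
    rw [hW, conjTranspose_mul, Matrix.mul_assoc _ (V0 g₀)ᴴ]
  rw [hWW] at hJ ⊢
  have hXpos : X.PosDef := by
    simpa using hJ.add_posSemidef (posSemidef_self_mul_conjTranspose W)
  have hQ : Q0 = 1 - Wᴴ * X⁻¹ * W := by
    rw [hQ0, hU0, conjTranspose_mul, hXpos.isHermitian.inv.eq]
  have hQh : Q0.IsHermitian :=
    hQ ▸ isHermitian_one.sub (isHermitian_conjTranspose_mul_mul W hXpos.isHermitian.inv)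
  have hQu : IsUnit Q0.det := hQ ▸ .of_mul_eq_one_right _
    (det_one_add_mul_inv_sub_mul_det_one_sub W Wᴴ hXpos.isUnit hJ.isUnit)
  have hmse : mseMatrix X W U0 = Q0 := by
    rw [hU0, mseMatrix_inv_mul hXpos.isHermitian hXpos.isUnit, hQ]
  have htrace := re_trace_surrogate_eq_re_trace_mul_mseMatrix H V0 g₀ R U0 hQh.inv
  rw [← hX, ← hW, hmse, nonsing_inv_mul _ hQu, trace_one, RCLike.natCast_re, ← hA, ← hB] at htrace
  have hlog := log_re_det_one_sub_eq_neg_log_re_det_one_add W hXpos.isHermitian hXpos.isUnit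
    hJ.isUnit
  rw [← hQ] at hlog
  rw [hf, hb, hlog]
  linarith

/-- Equality case of property (1.1) of Proposition 1: the surrogate `f` is tight at the
expansion point `(C⁰, η⁰, V⁰)`. -/
theorem stmt1 (N M d G : ℕ) (hN : 0 < N) (hM : 0 < M) (hd : 0 < d) (hG : 0 < G)
    (H : Matrix (Fin N) (Fin M) ℂ) (σ : ℝ) (hσ : 0 < σ) (g₀ : Fin G)
    (V0 : Fin G → Matrix (Fin M) (Fin d) ℂ) (F C0 η0 : ℝ)
    (U0 : Matrix (Fin N) (Fin d) ℂ) (hU0 : U0 = (Xmat H σ V0)⁻¹ * (H * V0 g₀))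
    (Q0 : Matrix (Fin d) (Fin d) ℂ) (hQ0 : Q0 = 1 - U0ᴴ * (H * V0 g₀))
    (A : Matrix (Fin M) (Fin M) ℂ) (hA : A = Hᴴ * U0 * Q0⁻¹ * U0ᴴ * H)
    (B : Matrix (Fin d) (Fin M) ℂ) (hB : B = -(Q0⁻¹ * U0ᴴ * H))
    (b : ℝ)
    (hb : b = ((Q0⁻¹ * (1 + ((σ : ℂ) ^ 2) • (U0ᴴ * U0))).trace).re
      + Real.log (Q0.det.re) + (η0 + C0) ^ 2 / 2 - d)
    (f : ℝ → ℝ → (Fin G → Matrix (Fin M) (Fin d) ℂ) → ℝ)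
    (hf : ∀ C η V, f C η V = (∑ g, (((V g)ᴴ * A * V g).trace).re)
      + 2 * ((B * V g₀).trace).re + (η ^ 2 + C ^ 2) / 2 + F * η
      - (η0 + C0) * (η + C) + b) :
    f C0 η0 V0 = (F - C0) * η0
      - Real.log ((((1 : Matrix (Fin N) (Fin N) ℂ)
          + H * V0 g₀ * (V0 g₀)ᴴ * Hᴴ * Jmat H σ g₀ V0).det).re) := by
  exact stmt1_general H _ g₀ V0 F C0 η0 _ rfl (posDef_Xmat_sub H hσ.ne' g₀ V0) U0 hU0 Q0 hQ0 A hA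
    B hB b (by simpa using hb) f hf
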